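/- arXiv:2001.04374 — 8 statements merged into one kernel-verified Lean document; each statement's English description precedes it below -/
import Mathlib

section
/- Let N'' be an ordinary signed Petri net structure in which every transition is positively signed (i.e., the product of the signs of all arcs incident to each transition equals +1) and in which every place has incident arcs of one kind only (all arcs incoming to or outgoing from that place have the same sign). Let A be the set of source vertices of N'' (vertices with no incoming arcs). Then there exists a marking μ of N'' with respect to which the set V \ A (where V = P ∪ T is the vertex set) is a dominating set. -/
/-!
Put one negative token in each place that has a negative incident arc, and no other tokens.
Since all arcs at a place carry the same sign, the sign of the place is then the sign of each of
its arcs (`SPNStructure.vertexSign_negMarking`). Every arc joins a place to a transition, and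
transitions have sign `+1`, so `σ(v,u) = S(v)·S(u)` holds for every arc. Finally a source vertex is
incident to some arc, which must leave it, and the head of that arc is not a source.
-/

/-- An ordinary signed Petri net (SPN) structure: finite, nonempty, disjoint
sets of places `P` and transitions `T` covering the vertex type `V`
(so that `V = P ∪ T`), an arc set `E ⊆ (P × T) ∪ (T × P)` (a `Finset`, hence
no multiple arcs, i.e. the structure is ordinary) such that every vertex is
incident to at least one arc, and a sign function `σ` taking values `±1` on
arcs. -/
structure SPNStructure (V : Type) [Fintype V] [DecidableEq V] where
  P : Finset V
  T : Finset V
  P_nonempty : P.Nonempty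
  T_nonempty : T.Nonempty
  PT_disjoint : Disjoint P T
  PT_cover : P ∪ T = Finset.univ
  E : Finset (V × V)
  E_bip : ∀ e ∈ E, (e.1 ∈ P ∧ e.2 ∈ T) ∨ (e.1 ∈ T ∧ e.2 ∈ P)
  sgn : V × V → ℤ
  sgn_pm : ∀ e ∈ E, sgn e = 1 ∨ sgn e = -1
  incident_ex : ∀ v : V, ∃ e ∈ E, e.1 = v ∨ e.2 = v

namespace SPNStructure

variable {V : Type} [Fintype V] [DecidableEq V]

/-- The sign of a transition `t`: the product of the signs of all arcs
(incoming and outgoing) incident to `t`. -/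
def transSign (N : SPNStructure V) (t : V) : ℤ :=
  ∏ e ∈ N.E.filter (fun e => e.1 = t ∨ e.2 = t), N.sgn e

/-- The sign of a vertex with respect to a negative marking `μm = μ⁻`:
a transition gets its arc-product sign, a place `p` gets `(-1)^(μ⁻ p)`
(the product of the signs of its tokens, token-free places counted positive). -/
def vertexSign (N : SPNStructure V) (μm : V → ℕ) (v : V) : ℤ :=
  if v ∈ N.T then N.transSign v else (-1 : ℤ) ^ (μm v)

/-- The out-neighbourhood `v• = {u : (v,u) ∈ E}` of a vertex. -/
def outN (N : SPNStructure V) (v : V) : Finset V :=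
  Finset.univ.filter (fun u => (v, u) ∈ N.E)

/-- `D` is a dominating set with respect to a marking whose negative part is
`μm`: either `D` contains all vertices, or every vertex `v ∉ D` has
`v• ∩ D ≠ ∅` and `σ(v,u) = S(v)·S(u)` for every `u ∈ v• ∩ D`. -/
def IsDominating (N : SPNStructure V) (μm : V → ℕ) (D : Finset V) : Prop :=
  D = Finset.univ ∨ ∀ v ∉ D,
    (∃ u ∈ D, (v, u) ∈ N.E) ∧
    ∀ u ∈ D, (v, u) ∈ N.E → N.sgn (v, u) = N.vertexSign μm v * N.vertexSign μm u

/-- A source vertex: a vertex with no incoming arcs. -/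
def IsSource (N : SPNStructure V) (v : V) : Prop := ∀ u, (u, v) ∉ N.E

instance (N : SPNStructure V) : DecidablePred N.IsSource := fun v =>
  decidable_of_iff (∀ u, (u, v) ∉ N.E) Iff.rfl

/-- A sink vertex: a vertex with no outgoing arcs. -/
def IsSink (N : SPNStructure V) (v : V) : Prop := ∀ u, (v, u) ∉ N.E

/-- Every place has incident (incoming or outgoing) arcs of one kind only:
any two arcs incident to the same place carry the same sign. -/
def OneKindPlaces (N : SPNStructure V) : Prop :=
  ∀ p ∈ N.P, ∀ e ∈ N.E, ∀ e' ∈ N.E,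
    (e.1 = p ∨ e.2 = p) → (e'.1 = p ∨ e'.2 = p) → N.sgn e = N.sgn e'

end SPNStructure

open SPNStructure

namespace SPNStructure

variable {V : Type} [Fintype V] [DecidableEq V]

open Classical in
/-- The negative part of the marking with one negative token in every vertex that has a negative
incident arc, and none elsewhere. Its values at transitions play no role in `vertexSign`. -/
noncomputable def negMarking (N : SPNStructure V) (v : V) : ℕ :=
  if ∃ e ∈ N.E, (e.1 = v ∨ e.2 = v) ∧ N.sgn e = -1 then 1 else 0

theorem notMem_T_of_mem_P (N : SPNStructure V) {p : V} (hp : p ∈ N.P) : p ∉ N.T :=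
  Finset.disjoint_left.mp N.PT_disjoint hp

theorem vertexSign_negMarking (N : SPNStructure V) (hP : N.OneKindPlaces) {p : V} (hp : p ∈ N.P)
    {e : V × V} (he : e ∈ N.E) (hep : e.1 = p ∨ e.2 = p) :
    N.vertexSign N.negMarking p = N.sgn e := by
  rw [vertexSign, if_neg (N.notMem_T_of_mem_P hp), negMarking]
  split_ifs with h
  · obtain ⟨e', he', hep', hs⟩ := h
    rw [hP p hp e he e' he' hep hep', hs, pow_one]
  · rcases N.sgn_pm e he with hs | hs
    · rw [hs, pow_zero]
    · exact absurd ⟨e, he, hep, hs⟩ h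

/-- With transitions positive, the relation `σ(v,u) = S(v)·S(u)` holds on all arcs. -/
theorem sgn_eq_vertexSign_mul (N : SPNStructure V) (hT : ∀ t ∈ N.T, N.transSign t = 1)
    (hP : N.OneKindPlaces) {v u : V} (h : (v, u) ∈ N.E) :
    N.sgn (v, u) = N.vertexSign N.negMarking v * N.vertexSign N.negMarking u := by
  have hS : ∀ t ∈ N.T, N.vertexSign N.negMarking t = 1 := fun t ht => by
    rw [vertexSign, if_pos ht, hT t ht]
  rcases N.E_bip _ h with ⟨hv, hu⟩ | ⟨hv, hu⟩
  · rw [hS u hu, mul_one, N.vertexSign_negMarking hP hv h (Or.inl rfl)]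
  · rw [hS v hv, one_mul, N.vertexSign_negMarking hP hu h (Or.inr rfl)]

end SPNStructure

/-- if every transition of an ordinary SPN structure is
positively signed and every place has incident arcs of one kind only, then
there is a marking `μ = (μ⁺, μ⁻)` with respect to which `V \ A` is a
dominating set, where `A` is the set of source vertices. -/
theorem stmt0 {V : Type} [Fintype V] [DecidableEq V] (N : SPNStructure V)
    (hT : ∀ t ∈ N.T, N.transSign t = 1)
    (hP : N.OneKindPlaces) :
    ∃ μ : (V → ℕ) × (V → ℕ),
      N.IsDominating μ.2
        (Finset.univ \ Finset.univ.filter (fun v => N.IsSource v)) := by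
  refine ⟨(fun _ => 0, N.negMarking), Or.inr fun v hv => ⟨?_, fun u _ h =>
    N.sgn_eq_vertexSign_mul hT hP h⟩⟩
  have hsrc : N.IsSource v := by simpa using hv
  obtain ⟨⟨a, b⟩, he, rfl | rfl⟩ := N.incident_ex v
  · refine ⟨b, ?_, he⟩
    have hb : ¬ N.IsSource b := fun hb => hb a he
    simpa using hb
  · exact absurd he (hsrc a)
end

section
/- Let N'' be an ordinary signed Petri net structure in which every transition is positively signed and in which every place has incident arcs of one kind only, and let A be the set of source vertices. Define a marking μ = (μ⁺, μ⁻) by choosing, for every place p, μ⁺(p) to be any nonnegative integer, and μ⁻(p) to be an even nonnegative integer if the incident arcs of p are positive and an odd positive integer if the incident arcs of p are negative. Then V \ A is a dominating set of N'' with respect to μ, where V = P ∪ T is the vertex set. -/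
open SPNStructure

/-- The parity condition on `μ⁻` makes the sign of a place agree with the sign of each incident
arc. -/
theorem vertexSign_place {V : Type} [Fintype V] [DecidableEq V] (N : SPNStructure V)
    (μm : V → ℕ)
    (hμ : ∀ p ∈ N.P, ∀ e ∈ N.E, (e.1 = p ∨ e.2 = p) →
      (N.sgn e = 1 → Even (μm p)) ∧ (N.sgn e = -1 → Odd (μm p)))
    {p : V} (hp : p ∈ N.P) {e : V × V} (he : e ∈ N.E) (hep : e.1 = p ∨ e.2 = p) :
    N.vertexSign μm p = N.sgn e := by
  have hpT : p ∉ N.T := Finset.disjoint_left.mp N.PT_disjoint hp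
  obtain ⟨heven, hodd⟩ := hμ p hp e he hep
  rw [vertexSign, if_neg hpT]
  rcases N.sgn_pm e he with h | h
  · rw [h, (heven h).neg_one_pow]
  · rw [h, (hodd h).neg_one_pow]

theorem sgn_eq_vertexSign_mul {V : Type} [Fintype V] [DecidableEq V] (N : SPNStructure V)
    (hT : ∀ t ∈ N.T, N.transSign t = 1) (μm : V → ℕ)
    (hμ : ∀ p ∈ N.P, ∀ e ∈ N.E, (e.1 = p ∨ e.2 = p) →
      (N.sgn e = 1 → Even (μm p)) ∧ (N.sgn e = -1 → Odd (μm p)))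
    {v u : V} (h : (v, u) ∈ N.E) :
    N.sgn (v, u) = N.vertexSign μm v * N.vertexSign μm u := by
  have hS : ∀ t ∈ N.T, N.vertexSign μm t = 1 := fun t ht => by
    rw [vertexSign, if_pos ht, hT t ht]
  rcases N.E_bip _ h with ⟨hv, hu⟩ | ⟨hv, hu⟩
  · rw [hS u hu, mul_one, vertexSign_place N μm hμ hv h (Or.inl rfl)]
  · rw [hS v hv, one_mul, vertexSign_place N μm hμ hu h (Or.inr rfl)]

/-- under the same hypotheses as Statement 0, any marking
`μ = (μ⁺, μ⁻)` with `μ⁻(p)` even whenever the incident arcs of the place `p`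
are positive and `μ⁻(p)` odd whenever they are negative (and `μ⁺` arbitrary)
makes `V \ A` a dominating set, where `A` is the set of source vertices. -/
theorem stmt1 {V : Type} [Fintype V] [DecidableEq V] (N : SPNStructure V)
    (hT : ∀ t ∈ N.T, N.transSign t = 1)
    (hP : N.OneKindPlaces)
    (μp μm : V → ℕ)
    (hμ : ∀ p ∈ N.P, ∀ e ∈ N.E, (e.1 = p ∨ e.2 = p) →
      (N.sgn e = 1 → Even (μm p)) ∧ (N.sgn e = -1 → Odd (μm p))) :
    N.IsDominating μm
      (Finset.univ \ Finset.univ.filter (fun v => N.IsSource v)) := by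
  refine Or.inr fun v hv => ⟨?_, fun u _ h => sgn_eq_vertexSign_mul N hT μm hμ h⟩
  have hsrc : N.IsSource v := by simpa using hv
  obtain ⟨⟨a, b⟩, he, rfl | rfl⟩ := N.incident_ex v
  · refine ⟨b, ?_, he⟩
    simpa using fun hb : N.IsSource b => hb _ he
  · exact absurd he (hsrc a)
end

section
/- Let N'' be an ordinary signed Petri net structure with no source vertices and no sink vertices, in which every place has incident arcs of one kind only, and in which all transitions are of the same sign. Then there exists a marking μ of N'' with respect to which both P (the set of all places) and T (the set of all transitions) are dominating sets. -/
open SPNStructure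

/-- in an ordinary SPN structure with no source and no sink
vertices, in which every place has incident arcs of one kind only and all
transitions are of the same sign, there is a marking `μ` with respect to
which both `P` and `T` are dominating sets. -/
theorem stmt2 {V : Type} [Fintype V] [DecidableEq V] (N : SPNStructure V)
    (hsrc : ∀ v : V, ¬ N.IsSource v)
    (hsnk : ∀ v : V, ¬ N.IsSink v)
    (hP : N.OneKindPlaces)
    (hT : (∀ t ∈ N.T, N.transSign t = 1) ∨ (∀ t ∈ N.T, N.transSign t = -1)) :
    ∃ μ : (V → ℕ) × (V → ℕ),
      N.IsDominating μ.2 N.P ∧ N.IsDominating μ.2 N.T := by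
  obtain ⟨c, hc, hcT⟩ : ∃ c : ℤ, (c = 1 ∨ c = -1) ∧ ∀ t ∈ N.T, N.transSign t = c := by
    rcases hT with h | h
    · exact ⟨1, Or.inl rfl, h⟩
    · exact ⟨-1, Or.inr rfl, h⟩
  choose a ha hav using N.incident_ex
  have hnT : ∀ v ∈ N.P, v ∉ N.T := fun v hv => Finset.disjoint_left.mp N.PT_disjoint hv
  have hcov : ∀ v, v ∈ N.P ∨ v ∈ N.T := fun v => by
    rw [← Finset.mem_union, N.PT_cover]
    exact Finset.mem_univ v
  -- One negative token in each place whose arc sign differs from `c`.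
  let m : V → ℕ := fun p => if N.sgn (a p) = c then 0 else 1
  have key : ∀ p ∈ N.P, ∀ t ∈ N.T, ∀ e ∈ N.E, (e.1 = p ∨ e.2 = p) →
      N.sgn e = N.vertexSign m p * N.vertexSign m t := by
    intro p hp t ht e he hep
    rw [hP p hp e he (a p) (ha p) hep (hav p)]
    simp only [vertexSign, if_neg (hnT p hp), if_pos ht, hcT t ht, m]
    rcases hc with rfl | rfl <;> rcases N.sgn_pm _ (ha p) with h | h <;> simp [h]
  refine ⟨(fun _ => 0, m), Or.inr fun v hv => ?_, Or.inr fun v hv => ?_⟩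
  · have hvT : v ∈ N.T := (hcov v).resolve_left hv
    refine ⟨?_, fun u hu he => ?_⟩
    · obtain ⟨u, hu⟩ := not_forall_not.mp (hsnk v)
      exact ⟨u, (N.E_bip _ hu).elim (fun h => absurd h.1 hv) And.right, hu⟩
    · rw [mul_comm]
      exact key u hu v hvT _ he (Or.inr rfl)
  · have hvP : v ∈ N.P := (hcov v).resolve_right hv
    refine ⟨?_, fun u hu he => key v hvP u hu _ he (Or.inl rfl)⟩
    obtain ⟨u, hu⟩ := not_forall_not.mp (hsnk v)
    exact ⟨u, (N.E_bip _ hu).elim And.right (fun h => absurd h.1 hv), hu⟩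
end

section
/- Let N'' be an ordinary signed Petri net structure with no source vertices and no sink vertices, in which every place has incident arcs of one kind only, and in which every transition is positively signed. Then there exists a marking μ of N'' with respect to which P, the set of all places, is a dominating set. -/
open SPNStructure

/-- in an ordinary SPN structure with no source and no sink
vertices, in which every place has incident arcs of one kind only and every
transition is positively signed, there is a marking `μ` with respect to
which the set `P` of all places is a dominating set. -/
theorem stmt3 {V : Type} [Fintype V] [DecidableEq V] (N : SPNStructure V)
    (hsrc : ∀ v : V, ¬ N.IsSource v)
    (hsnk : ∀ v : V, ¬ N.IsSink v)
    (hP : N.OneKindPlaces)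
    (hT : ∀ t ∈ N.T, N.transSign t = 1) :
    ∃ μ : (V → ℕ) × (V → ℕ), N.IsDominating μ.2 N.P := by
  classical
  refine ⟨(fun _ => 0, fun p => if ∃ e ∈ N.E, (e.1 = p ∨ e.2 = p) ∧ N.sgn e = -1 then 1 else 0),
    Or.inr fun t htP => ?_⟩
  have htT : t ∈ N.T := by
    have h : t ∈ N.P ∪ N.T := N.PT_cover ▸ Finset.mem_univ t
    exact (Finset.mem_union.mp h).resolve_left htP
  constructor
  · obtain ⟨p, hp⟩ : ∃ p, (t, p) ∈ N.E := by simpa [IsSink] using hsnk t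
    exact ⟨p, ((N.E_bip _ hp).resolve_left fun h => htP h.1).2, hp⟩
  · intro p hp htp
    have hpT : p ∉ N.T := Finset.disjoint_left.mp N.PT_disjoint hp
    simp only [vertexSign, if_pos htT, if_neg hpT, hT t htT, one_mul]
    split_ifs with h
    · obtain ⟨e, he, hep, hs⟩ := h
      rw [hP p hp _ htp e he (Or.inr rfl) hep, hs, pow_one]
    · rw [pow_zero]
      exact (N.sgn_pm _ htp).resolve_right fun hs => h ⟨_, htp, Or.inr rfl, hs⟩
end

section
/- Let N'' be an ordinary signed Petri net structure with no source vertices and no sink vertices, in which every place has incident arcs of one kind only, and in which every transition is positively signed. Then there exists a marking μ of N'' with respect to which T, the set of all transitions, is a dominating set. -/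
open SPNStructure

/-- in an ordinary SPN structure with no source and no sink
vertices, in which every place has incident arcs of one kind only and every
transition is positively signed, there is a marking `μ` with respect to
which the set `T` of all transitions is a dominating set. -/
theorem stmt4 {V : Type} [Fintype V] [DecidableEq V] (N : SPNStructure V)
    (hsrc : ∀ v : V, ¬ N.IsSource v)
    (hsnk : ∀ v : V, ¬ N.IsSink v)
    (hP : N.OneKindPlaces)
    (hT : ∀ t ∈ N.T, N.transSign t = 1) :
    ∃ μ : (V → ℕ) × (V → ℕ), N.IsDominating μ.2 N.T := by
  classical
  -- A place is marked with one negative token exactly when its outgoing arcs are negative;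
  -- as all transitions have sign `+1`, the domination condition reads `σ(p, t) = S(p)`.
  refine ⟨(fun _ => 0, fun v => if ∃ u, (v, u) ∈ N.E ∧ N.sgn (v, u) = -1 then 1 else 0),
    Or.inr fun v hv => ?_⟩
  have hvP : v ∈ N.P := by
    have h : v ∈ N.P ∪ N.T := N.PT_cover ▸ Finset.mem_univ v
    exact (Finset.mem_union.1 h).resolve_right hv
  constructor
  · obtain ⟨u, hu⟩ : ∃ u, (v, u) ∈ N.E := by simpa [IsSink] using hsnk v
    refine ⟨u, ?_, hu⟩
    rcases N.E_bip _ hu with h | h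
    · exact h.2
    · exact absurd h.1 hv
  · intro u hu huE
    simp only [vertexSign, if_neg hv, if_pos hu, hT u hu, mul_one]
    split_ifs with h
    · obtain ⟨w, hwE, hw⟩ := h
      rw [pow_one, ← hw]
      exact hP v hvP _ huE _ hwE (Or.inl rfl) (Or.inl rfl)
    · rw [pow_zero]
      exact (N.sgn_pm _ huE).resolve_right fun h' => h ⟨u, huE, h'⟩
end

section
/- Let N'' be an ordinary signed Petri net structure with no source vertices and no sink vertices, in which every place has incident arcs of one kind only, and in which every transition is negatively signed (the product of the signs of all arcs incident to each transition equals −1). Then there exists a marking μ of N'' with respect to which both P (the set of all places) and T (the set of all transitions) are dominating sets. -/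
open SPNStructure

/-- The negative part of the required marking: one negative token on each vertex incident to a
positive arc, none elsewhere. Only its values at places matter. -/
def SPNStructure.negTokens {V : Type} [Fintype V] [DecidableEq V] (N : SPNStructure V) (v : V) :
    ℕ :=
  if ∃ e ∈ N.E, (e.1 = v ∨ e.2 = v) ∧ N.sgn e = 1 then 1 else 0

theorem SPNStructure.sgn_eq_neg_pow {V : Type} [Fintype V] [DecidableEq V] (N : SPNStructure V)
    (hP : N.OneKindPlaces) {p : V} (hp : p ∈ N.P) {e : V × V} (he : e ∈ N.E)
    (hep : e.1 = p ∨ e.2 = p) : N.sgn e = -(-1 : ℤ) ^ N.negTokens p := by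
  unfold SPNStructure.negTokens
  split_ifs with h
  · obtain ⟨e', he', hep', h1⟩ := h
    rw [hP p hp e he e' he' hep hep', h1]
    norm_num
  · rcases N.sgn_pm e he with h1 | h1
    · exact absurd ⟨e, he, hep, h1⟩ h
    · rw [h1]
      norm_num

/-- in an ordinary SPN structure with no source and no sink
vertices, in which every place has incident arcs of one kind only and every
transition is negatively signed, there is a marking `μ` with respect to
which both `P` and `T` are dominating sets. -/
theorem stmt5 {V : Type} [Fintype V] [DecidableEq V] (N : SPNStructure V)
    (hsrc : ∀ v : V, ¬ N.IsSource v)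
    (hsnk : ∀ v : V, ¬ N.IsSink v)
    (hP : N.OneKindPlaces)
    (hT : ∀ t ∈ N.T, N.transSign t = -1) :
    ∃ μ : (V → ℕ) × (V → ℕ),
      N.IsDominating μ.2 N.P ∧ N.IsDominating μ.2 N.T := by
  have hPT : ∀ v, v ∈ N.P → v ∉ N.T := Finset.disjoint_left.mp N.PT_disjoint
  have hcov : ∀ v, v ∈ N.P ∨ v ∈ N.T := fun v => by
    rw [← Finset.mem_union, N.PT_cover]
    exact Finset.mem_univ v
  have hSP : ∀ p ∈ N.P, N.vertexSign N.negTokens p = (-1 : ℤ) ^ N.negTokens p := fun p hp => by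
    rw [SPNStructure.vertexSign, if_neg (hPT p hp)]
  have hST : ∀ t ∈ N.T, N.vertexSign N.negTokens t = -1 := fun t ht => by
    rw [SPNStructure.vertexSign, if_pos ht, hT t ht]
  have hout : ∀ v, ∃ u, (v, u) ∈ N.E := fun v => by
    simpa [SPNStructure.IsSink] using hsnk v
  refine ⟨(0, N.negTokens), Or.inr fun v hv => ?_, Or.inr fun v hv => ?_⟩
  · have hvT : v ∈ N.T := (hcov v).resolve_left hv
    refine ⟨?_, fun u hu he => ?_⟩
    · obtain ⟨u, he⟩ := hout v
      rcases N.E_bip _ he with h | h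
      · exact absurd h.1 hv
      · exact ⟨u, h.2, he⟩
    · rw [N.sgn_eq_neg_pow hP hu he (Or.inr rfl), hST v hvT, hSP u hu, neg_one_mul]
  · have hvP : v ∈ N.P := (hcov v).resolve_right hv
    refine ⟨?_, fun u hu he => ?_⟩
    · obtain ⟨u, he⟩ := hout v
      rcases N.E_bip _ he with h | h
      · exact ⟨u, h.2, he⟩
      · exact absurd h.1 hv
    · rw [N.sgn_eq_neg_pow hP hvP he (Or.inl rfl), hST u hu, hSP v hvP, mul_neg_one]
end

section
/- Let N'' be an ordinary signed Petri net structure with no source vertices and no sink vertices, in which every place has incident arcs of one kind only, and in which every transition is positively signed. Define a marking μ = (μ⁺, μ⁻) by choosing, for every place p, μ⁺(p) to be any nonnegative integer, and μ⁻(p) to be an even nonnegative integer if the incident arcs of p are positive and an odd positive integer if the incident arcs of p are negative. Then both P (the set of all places) and T (the set of all transitions) are dominating sets of N'' with respect to μ. -/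
open SPNStructure

/-- Under the parity condition on `μ⁻`, a place has the same sign as each of its incident arcs. -/
theorem sgn_eq_placeSign {V : Type} [Fintype V] [DecidableEq V] (N : SPNStructure V)
    (μm : V → ℕ)
    (hμ : ∀ p ∈ N.P, ∀ e ∈ N.E, (e.1 = p ∨ e.2 = p) →
      (N.sgn e = 1 → Even (μm p)) ∧ (N.sgn e = -1 → Odd (μm p)))
    {p : V} (hp : p ∈ N.P) {e : V × V} (he : e ∈ N.E) (hinc : e.1 = p ∨ e.2 = p) :
    N.sgn e = N.vertexSign μm p := by
  have hpT : p ∉ N.T := Finset.disjoint_left.mp N.PT_disjoint hp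
  obtain ⟨heven, hodd⟩ := hμ p hp e he hinc
  rw [vertexSign, if_neg hpT]
  rcases N.sgn_pm e he with h | h
  · rw [h, (heven h).neg_one_pow]
  · rw [h, (hodd h).neg_one_pow]

theorem sgn_eq_mul_vertexSign {V : Type} [Fintype V] [DecidableEq V] (N : SPNStructure V)
    (hT : ∀ t ∈ N.T, N.transSign t = 1) (μm : V → ℕ)
    (hμ : ∀ p ∈ N.P, ∀ e ∈ N.E, (e.1 = p ∨ e.2 = p) →
      (N.sgn e = 1 → Even (μm p)) ∧ (N.sgn e = -1 → Odd (μm p)))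
    {v u : V} (he : (v, u) ∈ N.E) :
    N.sgn (v, u) = N.vertexSign μm v * N.vertexSign μm u := by
  have htrans : ∀ t ∈ N.T, N.vertexSign μm t = 1 := fun t ht => by
    rw [vertexSign, if_pos ht, hT t ht]
  rcases N.E_bip _ he with ⟨hv, hu⟩ | ⟨hv, hu⟩
  · rw [htrans u hu, mul_one]
    exact sgn_eq_placeSign N μm hμ hv he (Or.inl rfl)
  · rw [htrans v hv, one_mul]
    exact sgn_eq_placeSign N μm hμ hu he (Or.inr rfl)

/-- in an ordinary SPN structure with no source and no sink
vertices, in which every place has incident arcs of one kind only and every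
transition is positively signed, any marking `μ = (μ⁺, μ⁻)` with `μ⁻(p)`
even whenever the incident arcs of the place `p` are positive and odd
whenever they are negative (and `μ⁺` arbitrary) makes both `P` and `T`
dominating sets. -/
theorem stmt6 {V : Type} [Fintype V] [DecidableEq V] (N : SPNStructure V)
    (hsrc : ∀ v : V, ¬ N.IsSource v)
    (hsnk : ∀ v : V, ¬ N.IsSink v)
    (hP : N.OneKindPlaces)
    (hT : ∀ t ∈ N.T, N.transSign t = 1)
    (μp μm : V → ℕ)
    (hμ : ∀ p ∈ N.P, ∀ e ∈ N.E, (e.1 = p ∨ e.2 = p) →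
      (N.sgn e = 1 → Even (μm p)) ∧ (N.sgn e = -1 → Odd (μm p))) :
    N.IsDominating μm N.P ∧ N.IsDominating μm N.T := by
  have hout : ∀ v, ∃ u, (v, u) ∈ N.E := fun v => by
    simpa [IsSink] using hsnk v
  constructor
  · refine Or.inr fun v hv => ⟨?_, fun u _ he => sgn_eq_mul_vertexSign N hT μm hμ he⟩
    obtain ⟨u, hu⟩ := hout v
    exact ⟨u, (N.E_bip _ hu).elim (fun h => absurd h.1 hv) And.right, hu⟩
  · refine Or.inr fun v hv => ⟨?_, fun u _ he => sgn_eq_mul_vertexSign N hT μm hμ he⟩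
    obtain ⟨u, hu⟩ := hout v
    exact ⟨u, (N.E_bip _ hu).elim And.right (fun h => absurd h.1 hv), hu⟩
end

section
/- Let N'' be an ordinary signed Petri net structure with no source vertices and no sink vertices, in which every place has incident arcs of one kind only, and in which every transition is negatively signed (the product of the signs of all arcs incident to each transition equals −1). Define a marking μ = (μ⁺, μ⁻) by choosing, for every place p, μ⁺(p) to be any nonnegative integer, and μ⁻(p) to be an odd positive integer if the incident arcs of p are positive and an even nonnegative integer if the incident arcs of p are negative. Then both P (the set of all places) and T (the set of all transitions) are dominating sets of N'' with respect to μ. -/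
open SPNStructure

namespace SPNStructure

/-- The marking makes the sign of a place the opposite of the common sign of its arcs. -/
theorem sgn_eq_neg_vertexSign {V : Type} [Fintype V] [DecidableEq V] (N : SPNStructure V)
    (μm : V → ℕ)
    (hμ : ∀ p ∈ N.P, ∀ e ∈ N.E, (e.1 = p ∨ e.2 = p) →
      (N.sgn e = 1 → Odd (μm p)) ∧ (N.sgn e = -1 → Even (μm p)))
    {p : V} (hp : p ∈ N.P) {e : V × V} (he : e ∈ N.E) (hep : e.1 = p ∨ e.2 = p) :
    N.sgn e = -N.vertexSign μm p := by
  have hpT : p ∉ N.T := Finset.disjoint_left.mp N.PT_disjoint hp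
  obtain ⟨hodd, heven⟩ := hμ p hp e he hep
  rw [vertexSign, if_neg hpT]
  rcases N.sgn_pm e he with h | h
  · rw [h, (hodd h).neg_one_pow, neg_neg]
  · rw [h, (heven h).neg_one_pow]

end SPNStructure

/-- in an ordinary SPN structure with no source and no sink
vertices, in which every place has incident arcs of one kind only and every
transition is negatively signed, any marking `μ = (μ⁺, μ⁻)` with `μ⁻(p)`
odd whenever the incident arcs of the place `p` are positive and even
whenever they are negative (and `μ⁺` arbitrary) makes both `P` and `T`
dominating sets. -/
theorem stmt7 {V : Type} [Fintype V] [DecidableEq V] (N : SPNStructure V)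
    (hsrc : ∀ v : V, ¬ N.IsSource v)
    (hsnk : ∀ v : V, ¬ N.IsSink v)
    (hP : N.OneKindPlaces)
    (hT : ∀ t ∈ N.T, N.transSign t = -1)
    (μp μm : V → ℕ)
    (hμ : ∀ p ∈ N.P, ∀ e ∈ N.E, (e.1 = p ∨ e.2 = p) →
      (N.sgn e = 1 → Odd (μm p)) ∧ (N.sgn e = -1 → Even (μm p))) :
    N.IsDominating μm N.P ∧ N.IsDominating μm N.T := by
  have hTsign : ∀ t ∈ N.T, N.vertexSign μm t = -1 := fun t ht => by
    rw [vertexSign, if_pos ht, hT t ht]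
  have hcover : ∀ v, v ∈ N.P ∨ v ∈ N.T := fun v =>
    Finset.mem_union.mp (N.PT_cover ▸ Finset.mem_univ v)
  have hout : ∀ v, ∃ u, (v, u) ∈ N.E := fun v => by
    simpa [IsSink] using hsnk v
  constructor
  · refine Or.inr fun v hv => ?_
    have hvT : v ∈ N.T := (hcover v).resolve_left hv
    refine ⟨?_, fun u hu he => ?_⟩
    · obtain ⟨u, he⟩ := hout v
      rcases N.E_bip _ he with h | h
      · exact absurd h.1 hv
      · exact ⟨u, h.2, he⟩
    · rw [N.sgn_eq_neg_vertexSign μm hμ hu he (Or.inr rfl), hTsign v hvT, neg_one_mul]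
  · refine Or.inr fun v hv => ?_
    have hvP : v ∈ N.P := (hcover v).resolve_right hv
    refine ⟨?_, fun u hu he => ?_⟩
    · obtain ⟨u, he⟩ := hout v
      rcases N.E_bip _ he with h | h
      · exact ⟨u, h.2, he⟩
      · exact absurd h.1 hv
    · rw [N.sgn_eq_neg_vertexSign μm hμ hvP he (Or.inl rfl), hTsign u hu, mul_neg_one]
end
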